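/- For the balanced Rudin–Shapiro sequence, η^{(4)}(m_1,m_2,m_3) = 1 if and only if, up to a permutation of the indices, m_1 = 0 and m_2 = m_3. Moreover, |θ^{(4)}(m_1,m_2,m_3)| < 1 for all (m_1,m_2,m_3) ∈ ℤ³. -/

import Mathlib

open Filter Finset

namespace RSAux

/-- the two-step recursion on the nonnegative half line -/
lemma two_rec (a : ℤ → ℝ)
    (hrec : ∀ m : ℤ, a (4 * m) = a m ∧ a (4 * m + 1) = a m ∧
      a (4 * m + 2) = (-1 : ℝ) ^ m * a m ∧ a (4 * m + 3) = -((-1 : ℝ) ^ m) * a m)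
    (n : ℕ) : a (2 * (n : ℤ)) = a n ∧ a (2 * (n : ℤ) + 1) = (-1 : ℝ) ^ (n : ℤ) * a n := by
  induction n using Nat.strong_induction_on with
  | _ n ih =>
    have hne : (-1 : ℝ) ≠ 0 := by norm_num
    rcases Nat.even_or_odd' n with ⟨k, rfl | rfl⟩
    · rcases Nat.eq_zero_or_pos k with rfl | hk
      · have := (hrec 0).2.1
        simpa using this
      · obtain ⟨h0, h1⟩ := ih k (by omega)
        obtain ⟨r0, r1, r2, r3⟩ := hrec k
        have e : (-1 : ℝ) ^ (2 * (k : ℤ)) = 1 := Even.neg_one_zpow (even_two_mul _)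
        push_cast
        rw [e, h0, ← mul_assoc]
        norm_num
        exact ⟨r0, r1⟩
    · obtain ⟨h0, h1⟩ := ih k (by omega)
      obtain ⟨r0, r1, r2, r3⟩ := hrec k
      have e : (-1 : ℝ) ^ (2 * (k : ℤ) + 1) = -1 := Odd.neg_one_zpow ⟨_, rfl⟩
      push_cast
      rw [e, h1]
      have e2 : 2 * (2 * (k : ℤ) + 1) = 4 * k + 2 := by ring
      rw [e2]
      refine ⟨r2, ?_⟩
      have e3 : 4 * (k : ℤ) + 2 + 1 = 4 * k + 3 := by ring
      rw [e3, r3]; ring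

lemma half_rec (a : ℤ → ℝ)
    (h2 : ∀ n : ℕ, a (2 * (n : ℤ)) = a n ∧ a (2 * (n : ℤ) + 1) = (-1 : ℝ) ^ (n : ℤ) * a n)
    (x : ℤ) (hx : 0 ≤ x) : a x = (-1 : ℝ) ^ ((x % 2) * (x / 2)) * a (x / 2) := by
  obtain ⟨n, hn⟩ := Int.eq_ofNat_of_zero_le (show 0 ≤ x / 2 by omega)
  obtain ⟨h0, h1⟩ := h2 n
  rcases Int.emod_two_eq_zero_or_one x with h | h
  · have : x = 2 * (n : ℤ) := by omega
    rw [h, hn]; simp; rw [this, h0]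
  · have : x = 2 * (n : ℤ) + 1 := by omega
    rw [h, hn, one_mul, ← h1, ← this]

/-- signed product -/
noncomputable def F (a : ℤ → ℝ) (e s t u v i : ℤ) : ℝ :=
  (-1 : ℝ) ^ (e * i) * (a (i + s) * a (i + t) * a (i + u) * a (i + v))

def P (a : ℤ → ℝ) (e s t u v : ℤ) : Prop :=
  ∃ c : ℝ, ∃ N : ℤ, ∀ i, N ≤ i → F a e s t u v i = c

def Paired (s t u v : ℤ) : Prop :=
  (s = t ∧ u = v) ∨ (s = u ∧ t = v) ∨ (s = v ∧ t = u)

lemma P_shift {a : ℤ → ℝ} {e s t u v : ℤ} (h : P a e s t u v) :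
    P a e (s + 1) (t + 1) (u + 1) (v + 1) := by
  obtain ⟨c, N, h⟩ := h
  refine ⟨c * (-1 : ℝ) ^ (-e), N, fun i hi => ?_⟩
  have hne : (-1 : ℝ) ≠ 0 := by norm_num
  rw [← h (i + 1) (by omega)]
  unfold F
  have e1 : (-1 : ℝ) ^ (e * i) = (-1 : ℝ) ^ (e * (i + 1)) * (-1 : ℝ) ^ (-e) := by
    rw [← zpow_add₀ hne]; congr 1; ring
  have q (x : ℤ) : i + (x + 1) = i + 1 + x := by ring
  rw [e1, q, q, q, q]; ring

lemma P_half {a : ℤ → ℝ}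
    (h2 : ∀ n : ℕ, a (2 * (n : ℤ)) = a n ∧ a (2 * (n : ℤ) + 1) = (-1 : ℝ) ^ (n : ℤ) * a n)
    {e s t u v : ℤ} (h : P a e s t u v) :
    P a (s % 2 + t % 2 + u % 2 + v % 2) (s / 2) (t / 2) (u / 2) (v / 2) := by
  obtain ⟨c, N, h⟩ := h
  have hne : (-1 : ℝ) ≠ 0 := by norm_num
  set d := (s % 2) * (s / 2) + (t % 2) * (t / 2) + (u % 2) * (u / 2) + (v % 2) * (v / 2) with hd
  refine ⟨c * (-1 : ℝ) ^ (-d), |N| + |s| + |t| + |u| + |v|, fun i hi => ?_⟩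
  have bN := le_abs_self N
  have bN' := abs_nonneg N
  have b1 := neg_abs_le s
  have b2 := neg_abs_le t
  have b3 := neg_abs_le u
  have b4 := neg_abs_le v
  have c1 := abs_nonneg s
  have c2 := abs_nonneg t
  have c3 := abs_nonneg u
  have c4 := abs_nonneg v
  rw [← h (2 * i) (by omega)]
  unfold F
  have q (x : ℤ) (hx : 0 ≤ 2 * i + x) :
      a (2 * i + x) = (-1 : ℝ) ^ ((x % 2) * (i + x / 2)) * a (i + x / 2) := by
    rw [half_rec a h2 _ hx]
    have p1 : (2 * i + x) % 2 = x % 2 := by omega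
    have p2 : (2 * i + x) / 2 = i + x / 2 := by omega
    rw [p1, p2]
  rw [q s (by omega), q t (by omega), q u (by omega), q v (by omega)]
  have ee : (-1 : ℝ) ^ (e * (2 * i)) = 1 := Even.neg_one_zpow ⟨e * i, by ring⟩
  have e1 : (-1 : ℝ) ^ ((s % 2 + t % 2 + u % 2 + v % 2) * i) =
      (-1 : ℝ) ^ ((s % 2) * (i + s / 2)) * (-1 : ℝ) ^ ((t % 2) * (i + t / 2)) *
      (-1 : ℝ) ^ ((u % 2) * (i + u / 2)) * (-1 : ℝ) ^ ((v % 2) * (i + v / 2)) *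
      (-1 : ℝ) ^ (-d) := by
    simp only [← zpow_add₀ hne]; congr 1; rw [hd]; ring
  rw [ee, e1]; ring

lemma F_paired {a : ℤ → ℝ} (ha : ∀ i, a i = 1 ∨ a i = -1) {s t u v : ℤ}
    (h : Paired s t u v) (i : ℤ) : a (i + s) * a (i + t) * a (i + u) * a (i + v) = 1 := by
  have sq (x : ℤ) : a x * a x = 1 := by rcases ha x with h | h <;> rw [h] <;> norm_num
  rcases h with ⟨rfl, rfl⟩ | ⟨rfl, rfl⟩ | ⟨rfl, rfl⟩
  · linear_combination (a (i + u) * a (i + u)) * sq (i + s) + sq (i + u)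
  · linear_combination (a (i + t) * a (i + t)) * sq (i + s) + sq (i + t)
  · linear_combination (a (i + t) * a (i + t)) * sq (i + s) + sq (i + t)

lemma even_of_paired {a : ℤ → ℝ} (ha : ∀ i, a i = 1 ∨ a i = -1) {e s t u v : ℤ}
    (h : Paired s t u v) (hP : P a e s t u v) : Even e := by
  obtain ⟨c, N, hc⟩ := hP
  by_contra hodd
  rw [Int.not_even_iff_odd] at hodd
  have hne : (-1 : ℝ) ≠ 0 := by norm_num
  have h1 := hc N le_rfl
  have h2 := hc (N + 1) (by omega)
  unfold F at h1 h2
  rw [F_paired ha h, mul_one] at h1 h2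
  rw [mul_add, zpow_add₀ hne, mul_one, hodd.neg_one_zpow] at h2
  have : (-1 : ℝ) ^ (e * N) ≠ 0 := zpow_ne_zero _ hne
  apply this; linarith

lemma paired_of_P {a : ℤ → ℝ} (ha : ∀ i, a i = 1 ∨ a i = -1)
    (h2 : ∀ n : ℕ, a (2 * (n : ℤ)) = a n ∧ a (2 * (n : ℤ) + 1) = (-1 : ℝ) ^ (n : ℤ) * a n)
    (D : ℕ) : ∀ (e s t u v b : ℤ), b ≤ s → b ≤ t → b ≤ u → b ≤ v →
      s ≤ b + D → t ≤ b + D → u ≤ b + D → v ≤ b + D → P a e s t u v → Paired s t u v := by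
  induction D using Nat.strong_induction_on with
  | _ D ih =>
    intro e s t u v b hs ht hu hv hs' ht' hu' hv' hP
    have c1 := P_half h2 hP
    have c2 := P_half h2 (P_shift hP)
    by_cases hD : 2 ≤ D
    · have p1 := ih (D - D / 2) (by omega) _ _ _ _ _ (b / 2) (by omega) (by omega) (by omega)
        (by omega) (by omega) (by omega) (by omega) (by omega) c1
      have p2 := ih (D - D / 2) (by omega) _ _ _ _ _ ((b + 1) / 2) (by omega) (by omega)
        (by omega) (by omega) (by omega) (by omega) (by omega) (by omega) c2
      clear ih c1 c2 hP
      unfold Paired at *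
      rcases p1 with h | h | h <;> rcases p2 with h' | h' | h' <;> omega
    · rcases Int.emod_two_eq_zero_or_one b with hb | hb
      · have p1 : Paired (s / 2) (t / 2) (u / 2) (v / 2) := Or.inl ⟨by omega, by omega⟩
        have ev := even_of_paired ha p1 c1
        rw [Int.even_iff] at ev
        unfold Paired
        omega
      · have p1 : Paired ((s + 1) / 2) ((t + 1) / 2) ((u + 1) / 2) ((v + 1) / 2) :=
          Or.inl ⟨by omega, by omega⟩
        have ev := even_of_paired ha p1 c2
        rw [Int.even_iff] at ev
        unfold Paired
        omega

lemma paired_of_P' {a : ℤ → ℝ} (ha : ∀ i, a i = 1 ∨ a i = -1)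
    (h2 : ∀ n : ℕ, a (2 * (n : ℤ)) = a n ∧ a (2 * (n : ℤ) + 1) = (-1 : ℝ) ^ (n : ℤ) * a n)
    {e s t u v : ℤ} (hP : P a e s t u v) : Paired s t u v :=
  paired_of_P ha h2 (2 * (s.natAbs + t.natAbs + u.natAbs + v.natAbs)) e s t u v
    (-(s.natAbs + t.natAbs + u.natAbs + v.natAbs : ℕ)) (by omega) (by omega) (by omega) (by omega)
    (by omega) (by omega) (by omega) (by omega) hP

lemma block {a : ℤ → ℝ} (ha : ∀ i, a i = 1 ∨ a i = -1)
    (h2 : ∀ n : ℕ, a (2 * (n : ℤ)) = a n ∧ a (2 * (n : ℤ) + 1) = (-1 : ℝ) ^ (n : ℤ) * a n)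
    (m : ℤ) (hm : 0 ≤ m) (k : ℕ) : ∀ j : ℤ, 0 ≤ j → j < 2 ^ k →
      a (2 ^ k * (2 * m) + j) = a (2 * m) * a 0 * a j := by
  have hne : (-1 : ℝ) ≠ 0 := by norm_num
  induction k with
  | zero =>
    intro j h0 h1
    have : j = 0 := by simp at h1; omega
    subst this
    rcases ha 0 with h | h <;> simp [h]
  | succ k ih =>
    intro j h0 h1
    have hp : (0 : ℤ) ≤ 2 ^ k * (2 * m) := by positivity
    have e0 : (2 : ℤ) ^ (k + 1) * (2 * m) + j = 2 * (2 ^ k * (2 * m)) + j := by ring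
    rw [pow_succ] at h1
    rw [e0, half_rec a h2 _ (by omega), half_rec a h2 j h0]
    have p1 : (2 * (2 ^ k * (2 * m)) + j) % 2 = j % 2 := by omega
    have p2 : (2 * (2 ^ k * (2 * m)) + j) / 2 = 2 ^ k * (2 * m) + j / 2 := by omega
    rw [p1, p2, ih (j / 2) (by omega) (by omega), mul_add, zpow_add₀ hne]
    have : (-1 : ℝ) ^ (j % 2 * (2 ^ k * (2 * m))) = 1 :=
      Even.neg_one_zpow ⟨j % 2 * (2 ^ k * m), by ring⟩
    rw [this]; ring

lemma F_periodic {a : ℤ → ℝ} (ha : ∀ i, a i = 1 ∨ a i = -1)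
    (h2 : ∀ n : ℕ, a (2 * (n : ℤ)) = a n ∧ a (2 * (n : ℤ) + 1) = (-1 : ℝ) ^ (n : ℤ) * a n)
    (e s t u v i : ℤ) (hs : 0 ≤ i + s) (ht : 0 ≤ i + t) (hu : 0 ≤ i + u) (hv : 0 ≤ i + v) :
    ∃ L : ℕ, 0 < L ∧ ∀ m : ℕ, F a e s t u v (i + L * m) = F a e s t u v i := by
  obtain ⟨k, hk⟩ : ∃ k : ℕ, (i + s) + (i + t) + (i + u) + (i + v) < 2 ^ k := by
    refine ⟨((i + s) + (i + t) + (i + u) + (i + v)).toNat, ?_⟩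
    have := Nat.lt_two_pow_self (n := ((i + s) + (i + t) + (i + u) + (i + v)).toNat)
    zify at this
    omega
  refine ⟨2 ^ k * 2, by positivity, fun m => ?_⟩
  have hne : (-1 : ℝ) ≠ 0 := by norm_num
  have q (x : ℤ) (hx : 0 ≤ i + x) (hx' : i + x < 2 ^ k) :
      a (i + ((2 ^ k * 2 : ℕ) : ℤ) * m + x) = a (2 * (m : ℤ)) * a 0 * a (i + x) := by
    rw [← block ha h2 m (by omega) k (i + x) hx hx']
    congr 1; push_cast; ring
  unfold F
  rw [q s hs (by omega), q t ht (by omega), q u hu (by omega), q v hv (by omega),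
    mul_add, zpow_add₀ hne]
  have : (-1 : ℝ) ^ (e * (((2 ^ k * 2 : ℕ) : ℤ) * m)) = 1 :=
    Even.neg_one_zpow ⟨e * (2 ^ k * m), by push_cast; ring⟩
  rw [this]
  rcases ha (2 * (m : ℤ)) with h | h <;> rcases ha 0 with h' | h' <;> rw [h, h'] <;> ring

lemma F_val {a : ℤ → ℝ} (ha : ∀ i, a i = 1 ∨ a i = -1) (e s t u v i : ℤ) :
    F a e s t u v i = 1 ∨ F a e s t u v i = -1 := by
  unfold F
  have h0 : (-1 : ℝ) ^ (e * i) = 1 ∨ (-1 : ℝ) ^ (e * i) = -1 := by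
    rcases Int.even_or_odd (e * i) with h | h
    · exact Or.inl h.neg_one_zpow
    · exact Or.inr h.neg_one_zpow
  rcases h0 with h | h <;> rcases ha (i + s) with h1 | h1 <;> rcases ha (i + t) with h2 | h2 <;>
    rcases ha (i + u) with h3 | h3 <;> rcases ha (i + v) with h4 | h4 <;>
    rw [h, h1, h2, h3, h4] <;> norm_num

lemma avg_lt (g : ℤ → ℝ) (hg : ∀ i, g i ≤ 1) (i₀ : ℤ) (h0 : 0 ≤ i₀) (L : ℕ) (hL : 0 < L)
    (hper : ∀ m : ℕ, g (i₀ + L * m) = -1) (l : ℝ)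
    (hl : Tendsto (fun N : ℕ => (1 / (2 * (N : ℝ) + 1)) * ∑ i ∈ Finset.Icc (-(N : ℤ)) (N : ℤ), g i)
      atTop (nhds l)) : l < 1 := by
  obtain ⟨n₀, rfl⟩ := Int.eq_ofNat_of_zero_le h0
  have hsub : Tendsto (fun M : ℕ => n₀ + L * M) atTop atTop := by
    apply tendsto_atTop_mono (f := fun M : ℕ => M) _ tendsto_id
    intro M; nlinarith
  have hl' := hl.comp hsub
  have key : l ≤ 1 - 2 / (2 * n₀ + 1 + 2 * L) := by
    refine le_of_tendsto' hl' fun M => ?_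
    simp only [Function.comp]
    set N := n₀ + L * M with hN
    have hcard : ∑ i ∈ Finset.Icc (-(N : ℤ)) (N : ℤ), (1 : ℝ) = 2 * N + 1 := by
      rw [Finset.sum_const, Int.card_Icc, nsmul_eq_mul, mul_one]
      have : ((N : ℤ) + 1 - -(N : ℤ)).toNat = 2 * N + 1 := by omega
      rw [this]; push_cast; ring
    have hinj : Function.Injective (fun m : ℕ => (n₀ : ℤ) + L * m) := by
      intro x y hxy
      have : (L : ℤ) * x = L * y := by simpa using hxy
      have := mul_left_cancel₀ (by exact_mod_cast hL.ne') this
      exact_mod_cast this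
    have hsum : 2 * ((M : ℝ) + 1) ≤ ∑ i ∈ Finset.Icc (-(N : ℤ)) (N : ℤ), (1 - g i) := by
      calc 2 * ((M : ℝ) + 1) = ∑ m ∈ Finset.range (M + 1), (1 - g ((n₀ : ℤ) + L * m)) := by
            rw [Finset.sum_congr rfl (fun m _ => by rw [hper m])]
            rw [Finset.sum_const, Finset.card_range, nsmul_eq_mul]; push_cast; ring
        _ = ∑ i ∈ (Finset.range (M + 1)).image (fun m : ℕ => (n₀ : ℤ) + L * m), (1 - g i) := by
            rw [Finset.sum_image (fun x _ y _ h => hinj h)]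
        _ ≤ _ := by
            apply Finset.sum_le_sum_of_subset_of_nonneg
            · intro x hx
              simp only [Finset.mem_image, Finset.mem_range] at hx
              obtain ⟨m, hm, rfl⟩ := hx
              have : L * m ≤ L * M := Nat.mul_le_mul_left _ (by omega)
              zify at this
              have hN' : (N : ℤ) = n₀ + L * M := by rw [hN]; push_cast; ring
              have : (0 : ℤ) ≤ L * m := by positivity
              rw [Finset.mem_Icc]; constructor <;> omega
            · intro i _ _; linarith [hg i]
    rw [Finset.sum_sub_distrib, hcard] at hsum
    have hNr : (N : ℝ) = n₀ + L * M := by rw [hN]; push_cast; ring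
    have hpos : (0 : ℝ) < 2 * N + 1 := by positivity
    have hpos2 : (0 : ℝ) < 2 * n₀ + 1 + 2 * L := by positivity
    have hfrac : 2 / (2 * (n₀ : ℝ) + 1 + 2 * L) ≤ 2 * ((M : ℝ) + 1) / (2 * N + 1) := by
      rw [div_le_div_iff₀ hpos2 hpos, hNr]
      have : (0 : ℝ) ≤ M * (2 * n₀ + 1) := by positivity
      have : (0 : ℝ) ≤ (L : ℝ) := by positivity
      nlinarith
    calc (1 / (2 * (N : ℝ) + 1)) * ∑ i ∈ Finset.Icc (-(N : ℤ)) (N : ℤ), g i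
        ≤ (1 / (2 * (N : ℝ) + 1)) * (2 * N + 1 - 2 * (M + 1)) := by
          apply mul_le_mul_of_nonneg_left _ (by positivity); linarith
      _ = 1 - 2 * ((M : ℝ) + 1) / (2 * N + 1) := by field_simp
      _ ≤ _ := by linarith
  have : (0 : ℝ) < 2 / (2 * n₀ + 1 + 2 * L) := by positivity
  linarith

/-- If the signed product is not eventually constant then the mean has absolute value below one. -/
lemma abs_lt_of_not_P {a : ℤ → ℝ} (ha : ∀ i, a i = 1 ∨ a i = -1)
    (h2 : ∀ n : ℕ, a (2 * (n : ℤ)) = a n ∧ a (2 * (n : ℤ) + 1) = (-1 : ℝ) ^ (n : ℤ) * a n)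
    (e s t u v : ℤ) (hP : ¬ P a e s t u v) (l : ℝ)
    (hl : Tendsto (fun N : ℕ => (1 / (2 * (N : ℝ) + 1)) *
      ∑ i ∈ Finset.Icc (-(N : ℤ)) (N : ℤ), F a e s t u v i) atTop (nhds l)) : |l| < 1 := by
  have ex (c : ℝ) : ∃ i : ℤ, 0 ≤ i ∧ 0 ≤ i + s ∧ 0 ≤ i + t ∧ 0 ≤ i + u ∧ 0 ≤ i + v ∧
      F a e s t u v i ≠ c := by
    by_contra hcon
    push Not at hcon
    exact hP ⟨c, s.natAbs + t.natAbs + u.natAbs + v.natAbs, fun i hi =>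
      hcon i (by omega) (by omega) (by omega) (by omega) (by omega)⟩
  rw [abs_lt]
  constructor
  · obtain ⟨i, h0, hs, ht, hu, hv, hne⟩ := ex (-1)
    obtain ⟨L, hL, hper⟩ := F_periodic ha h2 e s t u v i hs ht hu hv
    have hv := (F_val ha e s t u v i).resolve_right hne
    have := avg_lt (fun i => -F a e s t u v i)
      (fun i => by rcases F_val ha e s t u v i with h | h <;> simp only [h] <;> norm_num)
      i h0 L hL (fun m => by simp only [hper m, hv]) (-l)
      (by
        refine hl.neg.congr fun N => ?_
        rw [Finset.sum_neg_distrib]; ring)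
    linarith
  · obtain ⟨i, h0, hs, ht, hu, hv, hne⟩ := ex 1
    obtain ⟨L, hL, hper⟩ := F_periodic ha h2 e s t u v i hs ht hu hv
    have hv := (F_val ha e s t u v i).resolve_left hne
    exact avg_lt (fun i => F a e s t u v i)
      (fun i => by rcases F_val ha e s t u v i with h | h <;> simp only [h] <;> norm_num)
      i h0 L hL (fun m => by simp only [hper m, hv]) l hl

end RSAux



theorem rudin_shapiro_four_point_level_set_one (a : ℤ → ℝ)
    (ha : ∀ i, a i = 1 ∨ a i = -1)
    (hrec : ∀ m : ℤ, a (4 * m) = a m ∧ a (4 * m + 1) = a m ∧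
      a (4 * m + 2) = (-1 : ℝ) ^ m * a m ∧ a (4 * m + 3) = -((-1 : ℝ) ^ m) * a m)
    (η θ : ℤ → ℤ → ℤ → ℝ)
    (hη : ∀ m₁ m₂ m₃ : ℤ, Tendsto (fun N : ℕ =>
        (1 / (2 * (N : ℝ) + 1)) *
          ∑ i ∈ Finset.Icc (-(N : ℤ)) (N : ℤ),
            a i * a (i + m₁) * a (i + m₂) * a (i + m₃))
      atTop (nhds (η m₁ m₂ m₃)))
    (hθ : ∀ m₁ m₂ m₃ : ℤ, Tendsto (fun N : ℕ =>
        (1 / (2 * (N : ℝ) + 1)) *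
          ∑ i ∈ Finset.Icc (-(N : ℤ)) (N : ℤ),
            (-1 : ℝ) ^ i * a i * a (i + m₁) * a (i + m₂) * a (i + m₃))
      atTop (nhds (θ m₁ m₂ m₃)))
    (m₁ m₂ m₃ : ℤ) :
    (η m₁ m₂ m₃ = 1 ↔
      (m₁ = 0 ∧ m₂ = m₃) ∨ (m₂ = 0 ∧ m₁ = m₃) ∨ (m₃ = 0 ∧ m₁ = m₂)) ∧
    |θ m₁ m₂ m₃| < 1 := by

  have h2 := RSAux.two_rec a hrec
  have hη' : Tendsto (fun N : ℕ => (1 / (2 * (N : ℝ) + 1)) *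
      ∑ i ∈ Finset.Icc (-(N : ℤ)) (N : ℤ), RSAux.F a 0 0 m₁ m₂ m₃ i) atTop
      (nhds (η m₁ m₂ m₃)) := by
    refine (hη m₁ m₂ m₃).congr fun N => ?_
    congr 1
    refine Finset.sum_congr rfl fun i _ => ?_
    simp [RSAux.F]
  have hθ' : Tendsto (fun N : ℕ => (1 / (2 * (N : ℝ) + 1)) *
      ∑ i ∈ Finset.Icc (-(N : ℤ)) (N : ℤ), RSAux.F a 1 0 m₁ m₂ m₃ i) atTop
      (nhds (θ m₁ m₂ m₃)) := by
    refine (hθ m₁ m₂ m₃).congr fun N => ?_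
    congr 1
    refine Finset.sum_congr rfl fun i _ => ?_
    simp [RSAux.F, mul_assoc]
  refine ⟨⟨fun h1 => ?_, fun h => ?_⟩, ?_⟩
  · by_contra hnot
    have hP : ¬ RSAux.P a 0 0 m₁ m₂ m₃ := by
      intro hP
      have := RSAux.paired_of_P' ha h2 hP
      unfold RSAux.Paired at this
      omega
    have := RSAux.abs_lt_of_not_P ha h2 0 0 m₁ m₂ m₃ hP _ hη'
    rw [h1] at this
    norm_num at this
  · have hp : RSAux.Paired 0 m₁ m₂ m₃ := by
      unfold RSAux.Paired
      omega
    refine tendsto_nhds_unique hη' ?_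
    refine tendsto_const_nhds.congr fun N => ?_
    have hF : ∀ i, RSAux.F a 0 0 m₁ m₂ m₃ i = 1 := by
      intro i
      unfold RSAux.F
      rw [RSAux.F_paired ha hp]; simp
    simp only [hF]
    rw [Finset.sum_const, Int.card_Icc, nsmul_eq_mul, mul_one]
    have : ((N : ℤ) + 1 - -(N : ℤ)).toNat = 2 * N + 1 := by omega
    rw [this]
    push_cast
    have hpos : (2 * (N : ℝ) + 1) ≠ 0 := by positivity
    field_simp
  · refine RSAux.abs_lt_of_not_P ha h2 1 0 m₁ m₂ m₃ ?_ _ hθ'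
    intro hP
    have := RSAux.even_of_paired ha (RSAux.paired_of_P' ha h2 hP) hP
    exact absurd this (by decide)
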